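/- Let M, A ∈ ℕ with M ≥ 1, let f be an (M,A)-quasi-isometry from a connected graph G to a connected graph H, and set r := M²(3A+1) + 2A + M. If X ⊆ V(G) separates Y ⊆ V(G) and Z ⊆ V(G) in G, then B_H(f(X), r) separates f(Y) and f(Z) in H. -/

import Mathlib

open SimpleGraph

namespace CGT

/-- Distance between two vertex sets, as an extended natural number. -/
noncomputable def sDist {V : Type*} (G : SimpleGraph V) (U U' : Set V) : ℕ∞ :=
  ⨅ (u : U) (v : U'), G.edist u.1 v.1

/-- The ball of radius `r` around a vertex set `U`. -/
def gBall {V : Type*} (G : SimpleGraph V) (U : Set V) (r : ℕ) : Set V :=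
  {v | ∃ u ∈ U, G.edist u v ≤ (r : ℕ∞)}

/-- A set of vertices is connected if the induced subgraph is connected. -/
def SetConn {V : Type*} (G : SimpleGraph V) (U : Set V) : Prop :=
  (G.induce U).Connected

/-- The vertex set of a walk. -/
def walkSupp {V : Type*} {G : SimpleGraph V} {a b : V} (p : G.Walk a b) : Set V :=
  {v | v ∈ p.support}

/-- `X` separates `Y` and `Z` in `G`: every path with one end in `Y` and one in `Z`
contains a vertex of `X`. -/
def Separates {V : Type*} (G : SimpleGraph V) (X Y Z : Set V) : Prop :=
  ∀ ⦃y z : V⦄, y ∈ Y → z ∈ Z → ∀ p : G.Walk y z, p.IsPath → ∃ x ∈ X, x ∈ p.support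

/-- `f` is an `(M,A)`-quasi-isometry from `G` to `H`.  The two-sided distance bound
`M⁻¹ d_G(u,v) - A ≤ d_H(f u, f v) ≤ M d_G(u,v) + A` is stated multiplied out over `ℕ∞`. -/
structure IsQI {V V' : Type*} (M A : ℕ) (G : SimpleGraph V) (H : SimpleGraph V')
    (f : V → V') : Prop where
  upper : ∀ u v : V, H.edist (f u) (f v) ≤ (M : ℕ∞) * G.edist u v + (A : ℕ∞)
  lower : ∀ u v : V, G.edist u v ≤ (M : ℕ∞) * H.edist (f u) (f v) + (M : ℕ∞) * (A : ℕ∞)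
  dense : ∀ w : V', ∃ v : V, H.edist w (f v) ≤ (A : ℕ∞)

/-- `G` is `(M,A)`-quasi-isometric to `H`. -/
def QIsometric {V V' : Type*} (M A : ℕ) (G : SimpleGraph V) (H : SimpleGraph V') : Prop :=
  ∃ f : V → V', IsQI M A G H f

/-- `X` is a minor of `G`. -/
def HasMinor {V W : Type*} (G : SimpleGraph V) (X : SimpleGraph W) : Prop :=
  ∃ U : W → Set V,
    (∀ x, (U x).Nonempty) ∧ (∀ x, SetConn G (U x)) ∧
    (∀ ⦃x y⦄, x ≠ y → Disjoint (U x) (U y)) ∧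
    ∀ ⦃x y⦄, X.Adj x y → ∃ u ∈ U x, ∃ v ∈ U y, G.Adj u v

/-- The `(a × b)`-grid graph. -/
def gridGraph (a b : ℕ) : SimpleGraph (Fin a × Fin b) :=
  SimpleGraph.fromRel (fun u v =>
    (u.1 = v.1 ∧ u.2.1 + 1 = v.2.1) ∨ (u.2 = v.2 ∧ u.1.1 + 1 = v.1.1))

/-- A `K`-fat model of `X` in `G`: disjoint connected branch sets joined by internally
disjoint branch paths, all pairwise at distance at least `K` except for a branch path and
the branch sets of its endpoints. -/
structure FatModel {V W : Type*} (G : SimpleGraph V) (X : SimpleGraph W) (K : ℕ) where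
  branch : W → Set V
  branch_nonempty : ∀ x, (branch x).Nonempty
  branch_connected : ∀ x, SetConn G (branch x)
  branch_disjoint : ∀ ⦃x y⦄, x ≠ y → Disjoint (branch x) (branch y)
  pathEnd : ∀ ⦃x y⦄, X.Adj x y → V
  path : ∀ ⦃x y⦄ (e : X.Adj x y), G.Walk (pathEnd e) (pathEnd e.symm)
  path_isPath : ∀ ⦃x y⦄ (e : X.Adj x y), (path e).IsPath
  path_symm : ∀ ⦃x y⦄ (e : X.Adj x y), path e.symm = (path e).reverse
  pathEnd_mem : ∀ ⦃x y⦄ (e : X.Adj x y), pathEnd e ∈ branch x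
  path_meets : ∀ ⦃x y⦄ (e : X.Adj x y) (z : W) (v : V), v ∈ (path e).support → v ∈ branch z →
    (z = x ∧ v = pathEnd e) ∨ (z = y ∧ v = pathEnd e.symm)
  path_int_disjoint : ∀ ⦃x y x' y'⦄ (e : X.Adj x y) (e' : X.Adj x' y'), s(x, y) ≠ s(x', y') →
    ∀ v, v ∈ (path e).support → v ∈ (path e').support → v = pathEnd e' ∨ v = pathEnd e'.symm
  fat_branch : ∀ ⦃x y⦄, x ≠ y → (K : ℕ∞) ≤ sDist G (branch x) (branch y)
  fat_path_branch : ∀ ⦃x y⦄ (e : X.Adj x y) (z : W), z ≠ x → z ≠ y →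
    (K : ℕ∞) ≤ sDist G (walkSupp (path e)) (branch z)
  fat_paths : ∀ ⦃x y x' y'⦄ (e : X.Adj x y) (e' : X.Adj x' y'), s(x, y) ≠ s(x', y') →
    (K : ℕ∞) ≤ sDist G (walkSupp (path e)) (walkSupp (path e'))

/-- `X` is a `K`-fat minor of `G`. -/
def IsFatMinor {V W : Type*} (G : SimpleGraph V) (X : SimpleGraph W) (K : ℕ) : Prop :=
  Nonempty (FatModel G X K)

/-- `W` is a `K`-fat `n`-path-connected set in `G`. -/
def FatPathConn {V : Type*} (G : SimpleGraph V) (K n : ℕ) (W : Set V) : Prop :=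
  (∃ S : Finset V, ↑S ⊆ W ∧ 2 * n ≤ S.card) ∧
  (∀ ⦃u v : V⦄, u ∈ W → v ∈ W → u ≠ v → (K : ℕ∞) ≤ G.edist u v) ∧
  ∀ l : ℕ, l ≤ n → ∀ A B : Finset V, ↑A ⊆ W → ↑B ⊆ W → A.card = l → B.card = l →
    ∃ (a b : Fin l → V) (P : ∀ i : Fin l, G.Walk (a i) (b i)),
      (∀ i, (P i).IsPath) ∧ (∀ i, a i ∈ A ∧ b i ∈ B) ∧
      ∀ i j, i ≠ j → (K : ℕ∞) ≤ sDist G (walkSupp (P i)) (walkSupp (P j))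

end CGT

namespace Ghdm

/-- Raw vertex codes for the graphs `G_{h,d,m}`:
`path k` is the `k`-th vertex of the base path; `tree j i p` is the vertex at position `p`
of the `i`-th binary tree at level `j` (the root being position `[]`); and
`spine j i k t e s` is the `s`-th internal vertex of the spine from the `k`-th leaf of that
tree to the `e`-th element of the `t`-th local gluing set at level `j-1`. -/
inductive Raw : Type where
  | path (k : ℕ)
  | tree (j i : ℕ) (p : List Bool)
  | spine (j i k t e s : ℕ)
deriving DecidableEq

/-- `N = 2^{h+1} - 1`, the number of copies of `G_{h,d,m-1}` glued inside `G_{h,d,m}`. -/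
def NN (h : ℕ) : ℕ := 2 ^ (h + 1) - 1

/-- Canonical representative of a raw vertex code: all tree roots are identified with the
single root `tree m 1 []`, and the leftmost leaf of tree `i > 1` is identified with the
rightmost leaf of tree `i - 1` (consecutive copies are glued along these leaves). -/
def canon (h m : ℕ) : Raw → Raw
  | .tree j i p =>
    if p = [] then .tree m 1 []
    else if p = List.replicate h false ∧ 1 < i then .tree j (i - 1) (List.replicate h true)
    else .tree j i p
  | x => x

/-- The `q`-bit binary representation of `i` (most significant bit first);
`false` means "left". -/
def natToBits (q i : ℕ) : List Bool := (List.range q).map fun a => Nat.testBit i (q - 1 - a)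

/-- Position of the `k`-th leaf (1-based, from the left) in a binary tree of height `h`. -/
def leafPos (h k : ℕ) : List Bool := natToBits h (k - 1)

/-- The `e`-th element of the `g`-th gluing set `V^{jv}_g` (at level `jv`):
its element `e = 1` is an anchor of the base path, and its element `e ≥ 2` is a shared
extreme leaf of the trees at level `e`. -/
def VsetElem (h d jv g e : ℕ) : Raw :=
  if e = 1 then .path ((g - 1) * NN h ^ (jv - 1) * (d + 1))
  else if (g - 1) * NN h ^ (jv - e) = 0 then .tree e 1 (List.replicate h false)
  else .tree e ((g - 1) * NN h ^ (jv - e)) (List.replicate h true)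

/-- Valid (canonical) vertex codes of `G_{h,d,m}`. -/
def Valid (h d m : ℕ) : Raw → Prop
  | .path k => k ≤ (d + 1) * NN h ^ (m - 1)
  | .tree j i p => 2 ≤ j ∧ j ≤ m ∧ 1 ≤ i ∧ i ≤ NN h ^ (m - j) ∧ p.length ≤ h ∧
      (p = [] → j = m ∧ i = 1) ∧ (p = List.replicate h false → p ≠ [] → i = 1)
  | .spine j i k t e s => 2 ≤ j ∧ j ≤ m ∧ 1 ≤ i ∧ i ≤ NN h ^ (m - j) ∧
      1 ≤ k ∧ k ≤ 2 ^ h ∧ (t = 2 * k - 2 ∨ t = 2 * k + 1) ∧ 1 ≤ t ∧ t ≤ 2 ^ (h + 1) ∧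
      1 ≤ e ∧ e ≤ j - 1 ∧ 1 ≤ s ∧ s ≤ d

/-- Generating adjacencies between raw vertex codes: consecutive base path vertices,
parent/child in the binary trees, consecutive spine vertices, a spine and the leaf it
starts at, a spine and the gluing-set vertex it ends at (the latter collapsed to a single
edge when `d = 0`). -/
inductive rawAdj (h d : ℕ) : Raw → Raw → Prop
  | base (k : ℕ) : rawAdj h d (.path k) (.path (k + 1))
  | child (j i : ℕ) (p : List Bool) (b : Bool) : p.length < h →
      rawAdj h d (.tree j i p) (.tree j i (p ++ [b]))
  | step (j i k t e s : ℕ) : rawAdj h d (.spine j i k t e s) (.spine j i k t e (s + 1))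
  | toLeaf (j i k t e : ℕ) : rawAdj h d (.tree j i (leafPos h k)) (.spine j i k t e 1)
  | toV (j i k t e : ℕ) :
      rawAdj h d (.spine j i k t e d) (VsetElem h d (j - 1) ((i - 1) * NN h + t) e)
  | short (j i k t e : ℕ) : d = 0 → 1 ≤ k → k ≤ 2 ^ h → (t = 2 * k - 2 ∨ t = 2 * k + 1) →
      1 ≤ t → t ≤ 2 ^ (h + 1) → 1 ≤ e → e ≤ j - 1 →
      rawAdj h d (.tree j i (leafPos h k)) (VsetElem h d (j - 1) ((i - 1) * NN h + t) e)

/-- Adjacency of canonical representatives. -/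
def rel (h d m : ℕ) (x y : Raw) : Prop :=
  ∃ a b, rawAdj h d a b ∧ x = canon h m a ∧ y = canon h m b

/-- The vertex set of `G_{h,d,m}`. -/
def Verts (h d m : ℕ) : Set Raw := {x | Valid h d m x}

/-- The graph `G_{h,d,m}`. -/
def G (h d m : ℕ) : SimpleGraph (Verts h d m) :=
  (SimpleGraph.fromRel (rel h d m)).induce (Verts h d m)

/-- Lift a set of raw codes to a set of vertices of `G_{h,d,m}`. -/
def lift {h d m : ℕ} (S : Set Raw) : Set (Verts h d m) := Subtype.val ⁻¹' S

/-- The root `R(G_{h,d,m})`. -/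
def RootR (m : ℕ) : Raw := .tree m 1 []

/-- The gluing set `V^{jv}_g` of `G_{h,d,m}`, as a set of raw codes. -/
def VsetRaw (h d m jv g : ℕ) : Set Raw :=
  {x | ∃ e, 1 ≤ e ∧ e ≤ jv ∧ x = canon h m (VsetElem h d jv g e)}

/-- The set `S(G_{h,d,m})`. -/
def SsetR (h d m : ℕ) : Set Raw :=
  VsetRaw h d m (m - 1) 1 ∪ {canon h m (.tree m 1 (leafPos h 1))}

/-- The set `T(G_{h,d,m})`. -/
def TsetR (h d m : ℕ) : Set Raw :=
  VsetRaw h d m (m - 1) (2 ^ (h + 1)) ∪ {canon h m (.tree m 1 (leafPos h (2 ^ h)))}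

/-- For a vertex of the top binary tree at position `p`, the (1-based) index of the
leftmost leaf of the top tree below it. -/
def kOf (h : ℕ) (p : List Bool) : ℕ :=
  (p.foldl (fun a b => 2 * a + if b then 1 else 0) 0) * 2 ^ (h - p.length) + 1

/-- `S(Δ(x))` for the vertex `x` of the top binary tree `B(G_{h,d,m})` at position `p`. -/
def SDeltaR (h d m : ℕ) (p : List Bool) : Set Raw :=
  VsetRaw h d m (m - 1) (2 * kOf h p - 1) ∪ {canon h m (.tree m 1 (leafPos h (kOf h p)))}

/-- The leaf of `B(G_{h,d,m})` immediately to the left of the leftmost leaf below the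
top-tree vertex at position `p`; it is the unique leaf joined by spines to `S(Δ(x))`. -/
def leafLeftR (h m : ℕ) (p : List Bool) : Raw :=
  canon h m (.tree m 1 (leafPos h (kOf h p - 1)))

end Ghdm

theorem aux_geo {V V' : Type*} (M A : ℕ)
    (G : SimpleGraph V) (H : SimpleGraph V') (hG : G.Connected)
    (f : V → V') (hf : CGT.IsQI M A G H f) (w : V') (v v' : V)
    (h1 : H.edist w (f v) ≤ (A : ℕ∞)) (h2 : H.edist (f v) (f v') ≤ ((2 * A + 1 : ℕ) : ℕ∞)) :
    ∃ q : G.Walk v v', ∀ x ∈ q.support,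
      H.edist (f x) w ≤ ((M ^ 2 * (3 * A + 1) + 2 * A + M : ℕ) : ℕ∞) := by
  classical
  obtain ⟨q, hq⟩ := (hG.preconnected v v').exists_walk_length_eq_edist
  refine ⟨q, fun x hx => ?_⟩
  have hl : (q.length : ℕ∞) ≤ ((M * (2 * A + 1) + M * A : ℕ) : ℕ∞) := by
    rw [hq]
    refine (hf.lower v v').trans ?_
    push_cast
    push_cast at h2
    gcongr
  have hl' : q.length ≤ M * (2 * A + 1) + M * A := by exact_mod_cast hl
  have hx1 : G.edist x v ≤ ((M * (2 * A + 1) + M * A : ℕ) : ℕ∞) := by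
    rw [SimpleGraph.edist_comm]
    refine (SimpleGraph.edist_le (q.takeUntil x hx)).trans ?_
    exact_mod_cast (q.length_takeUntil_le hx).trans hl'
  have hx2 : H.edist (f x) (f v) ≤ ((M * (M * (2 * A + 1) + M * A) + A : ℕ) : ℕ∞) := by
    refine (hf.upper x v).trans ?_
    push_cast
    push_cast at hx1
    gcongr
  rw [SimpleGraph.edist_comm] at h1
  calc H.edist (f x) w ≤ H.edist (f x) (f v) + H.edist (f v) w := SimpleGraph.edist_triangle
    _ ≤ ((M * (M * (2 * A + 1) + M * A) + A : ℕ) : ℕ∞) + (A : ℕ∞) := add_le_add hx2 h1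
    _ ≤ _ := by
      norm_cast
      nlinarith

theorem aux_walk {V V' : Type*} (M A : ℕ)
    (G : SimpleGraph V) (H : SimpleGraph V') (hG : G.Connected)
    (f : V → V') (hf : CGT.IsQI M A G H f) {w w' : V'} (p : H.Walk w w') :
    ∀ v v' : V, H.edist w (f v) ≤ (A : ℕ∞) → H.edist w' (f v') ≤ (A : ℕ∞) →
    ∃ q : G.Walk v v', ∀ x ∈ q.support, ∃ u ∈ p.support,
      H.edist (f x) u ≤ ((M ^ 2 * (3 * A + 1) + 2 * A + M : ℕ) : ℕ∞) := by
  induction p with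
  | nil =>
    rename_i u
    intro v v' h1 h2
    have h3 : H.edist (f v) (f v') ≤ ((2 * A + 1 : ℕ) : ℕ∞) := by
      calc H.edist (f v) (f v') ≤ H.edist (f v) u + H.edist u (f v') := SimpleGraph.edist_triangle
        _ ≤ (A : ℕ∞) + (A : ℕ∞) := add_le_add (by rwa [SimpleGraph.edist_comm]) h2
        _ ≤ _ := by norm_cast; omega
    obtain ⟨q, hq⟩ := aux_geo M A G H hG f hf u v v' h1 h3
    exact ⟨q, fun x hx => ⟨u, by simp, hq x hx⟩⟩
  | cons hadj p ih =>
    rename_i a b c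
    intro v v' h1 h2
    obtain ⟨t, ht⟩ := hf.dense b
    have h3 : H.edist (f v) (f t) ≤ ((2 * A + 1 : ℕ) : ℕ∞) := by
      calc H.edist (f v) (f t) ≤ H.edist (f v) a + H.edist a (f t) := SimpleGraph.edist_triangle
        _ ≤ H.edist (f v) a + (H.edist a b + H.edist b (f t)) :=
          add_le_add le_rfl SimpleGraph.edist_triangle
        _ ≤ (A : ℕ∞) + (1 + (A : ℕ∞)) := by
          refine add_le_add (by rwa [SimpleGraph.edist_comm]) (add_le_add ?_ ht)
          exact (SimpleGraph.edist_eq_one_iff_adj.2 hadj).le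
        _ ≤ _ := by norm_cast; omega
    obtain ⟨q, hq⟩ := aux_geo M A G H hG f hf a v t h1 h3
    obtain ⟨q', hq'⟩ := ih t v' ht h2
    refine ⟨q.append q', fun x hx => ?_⟩
    rw [SimpleGraph.Walk.mem_support_append_iff] at hx
    rcases hx with hx | hx
    · exact ⟨a, by simp, hq x hx⟩
    · obtain ⟨u, hu, hux⟩ := hq' x hx
      exact ⟨u, by simp [hu], hux⟩

/-- quasi-isometries preserve separators, coarsely: with
`r := M²(3A+1) + 2A + M`, if `X` separates `Y` and `Z` in `G`, then the ball of radius
`r` around `f(X)` separates `f(Y)` and `f(Z)` in `H`. -/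
theorem statement3 {V V' : Type*} (M A : ℕ) (hM : 1 ≤ M)
    (G : SimpleGraph V) (H : SimpleGraph V') (hG : G.Connected) (hH : H.Connected)
    (f : V → V') (hf : CGT.IsQI M A G H f)
    (X Y Z : Set V) (hsep : CGT.Separates G X Y Z) :
    CGT.Separates H (CGT.gBall H (f '' X) (M ^ 2 * (3 * A + 1) + 2 * A + M))
      (f '' Y) (f '' Z) := by
  classical
  rintro _ _ ⟨y, hy, rfl⟩ ⟨z, hz, rfl⟩ p _
  obtain ⟨q, hq⟩ := aux_walk M A G H hG f hf p y z (by simp) (by simp)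
  obtain ⟨x, hx, hxq⟩ := hsep hy hz q.bypass q.bypass_isPath
  obtain ⟨u, hu, hux⟩ := hq x (q.support_bypass_subset_support hxq)
  exact ⟨u, ⟨f x, ⟨x, hx, rfl⟩, hux⟩, hu⟩
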